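/- arXiv:1702.08193 — 2 statements merged into one kernel-verified Lean document; each statement's English description precedes it below -/
import Mathlib

section
/- For every 𝒜 ⊆ {C, N, P, D, T, 4}, the linear nested sequent calculus LNS_M𝒜ConW is sound and complete for the monotone modal logic M𝒜: for every formula A, A ∈ M𝒜 if and only if the linear nested sequent ⇒ A is derivable in LNS_M𝒜ConW. -/
/-- Monomodal formulas. -/
inductive Fm : Type
  | var : ℕ → Fm
  | bot : Fm
  | top : Fm
  | neg : Fm → Fm
  | and : Fm → Fm → Fm
  | or : Fm → Fm → Fm
  | imp : Fm → Fm → Fm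
  | box : Fm → Fm

/-- Evaluation of the propositional structure of a formula under an assignment
`v` of truth values to formulas (only used on atoms, i.e. propositional
variables and boxed formulas). -/
def evalP (v : Fm → Prop) : Fm → Prop
  | .var n => v (.var n)
  | .bot => False
  | .top => True
  | .neg A => ¬ evalP v A
  | .and A B => evalP v A ∧ evalP v B
  | .or A B => evalP v A ∨ evalP v B
  | .imp A B => evalP v A → evalP v B
  | .box A => v (.box A)

/-- `A` is an instance of a classical propositional tautology. -/
def Taut (A : Fm) : Prop := ∀ v, evalP v A

/-- A component of a (linear nested) sequent: a two-sided multiset sequent. -/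
abbrev Cmp := Multiset Fm × Multiset Fm

/-- A set of additional axioms for monotone modal logic `M`, among
`C, N, P, D, T, 4, 5`. -/
structure MAx where
  c : Bool := false
  n : Bool := false
  p : Bool := false
  d : Bool := false
  t : Bool := false
  four : Bool := false
  five : Bool := false

/-- Hilbert-style theoremhood in the extension `M𝒜` of monotone modal logic
`M` (classical propositional logic, the congruence rule and the axiom `M`)
with the axioms in `𝒜`. -/
inductive MThm (Ax : MAx) : Fm → Prop
  | taut {A} : Taut A → MThm Ax A
  | mp {A B} : MThm Ax (.imp A B) → MThm Ax A → MThm Ax B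
  | cong {A B} : MThm Ax (.imp A B) → MThm Ax (.imp B A) →
      MThm Ax (.imp (.box A) (.box B))
  | axM {A B} : MThm Ax (.imp (.box (.and A B)) (.and (.box A) (.box B)))
  | axC {A B} : Ax.c = true →
      MThm Ax (.imp (.and (.box A) (.box B)) (.box (.and A B)))
  | axN : Ax.n = true → MThm Ax (.box .top)
  | axP : Ax.p = true → MThm Ax (.neg (.box .bot))
  | axD {A} : Ax.d = true → MThm Ax (.neg (.and (.box A) (.box (.neg A))))
  | axT {A} : Ax.t = true → MThm Ax (.imp (.box A) A)
  | ax4 {A} : Ax.four = true → MThm Ax (.imp (.box A) (.box (.box A)))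
  | ax5 {A} : Ax.five = true → MThm Ax (.or (.box A) (.box (.neg (.box A))))

/-- A linear nested sequent of type `LNS^m`: a (nonempty) list of components
joined by the nesting `⫽`, optionally terminated by a unary nesting
`⫽ᵐ Σ ⇒ Π`. -/
abbrev LNSm := List Cmp × Option Cmp

/-- The linear nested sequent calculus `LNS_M𝒜ConW` for extensions of
monotone modal logic: classical propositional rules applied in any component
(but not inside `⫽ᵐ`), internal weakening and contraction, the modal rules
`□_R^m` and `□_L^m`, and the structural rule corresponding to each axiom in
`𝒜` (the rule `N` also being present whenever `5 ∈ 𝒜`, since `N` is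
derivable in `M5`). -/
inductive LM (Ax : MAx) : LNSm → Prop
  | init {pre post : List Cmp} {ep} {Γ Δ : Multiset Fm} {m : ℕ} :
      LM Ax (pre ++ (Fm.var m ::ₘ Γ, Fm.var m ::ₘ Δ) :: post, ep)
  | botL {pre post ep Γ Δ} :
      LM Ax (pre ++ (Fm.bot ::ₘ Γ, Δ) :: post, ep)
  | topR {pre post ep Γ Δ} :
      LM Ax (pre ++ (Γ, Fm.top ::ₘ Δ) :: post, ep)
  | negL {pre post ep Γ Δ A} :
      LM Ax (pre ++ (Γ, A ::ₘ Δ) :: post, ep) →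
      LM Ax (pre ++ (Fm.neg A ::ₘ Γ, Δ) :: post, ep)
  | negR {pre post ep Γ Δ A} :
      LM Ax (pre ++ (A ::ₘ Γ, Δ) :: post, ep) →
      LM Ax (pre ++ (Γ, Fm.neg A ::ₘ Δ) :: post, ep)
  | andL {pre post ep Γ Δ A B} :
      LM Ax (pre ++ (A ::ₘ B ::ₘ Γ, Δ) :: post, ep) →
      LM Ax (pre ++ (Fm.and A B ::ₘ Γ, Δ) :: post, ep)
  | andR {pre post ep Γ Δ A B} :
      LM Ax (pre ++ (Γ, A ::ₘ Δ) :: post, ep) →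
      LM Ax (pre ++ (Γ, B ::ₘ Δ) :: post, ep) →
      LM Ax (pre ++ (Γ, Fm.and A B ::ₘ Δ) :: post, ep)
  | orL {pre post ep Γ Δ A B} :
      LM Ax (pre ++ (A ::ₘ Γ, Δ) :: post, ep) →
      LM Ax (pre ++ (B ::ₘ Γ, Δ) :: post, ep) →
      LM Ax (pre ++ (Fm.or A B ::ₘ Γ, Δ) :: post, ep)
  | orR {pre post ep Γ Δ A B} :
      LM Ax (pre ++ (Γ, A ::ₘ B ::ₘ Δ) :: post, ep) →
      LM Ax (pre ++ (Γ, Fm.or A B ::ₘ Δ) :: post, ep)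
  | impL {pre post ep Γ Δ A B} :
      LM Ax (pre ++ (B ::ₘ Γ, Δ) :: post, ep) →
      LM Ax (pre ++ (Γ, A ::ₘ Δ) :: post, ep) →
      LM Ax (pre ++ (Fm.imp A B ::ₘ Γ, Δ) :: post, ep)
  | impR {pre post ep Γ Δ A B} :
      LM Ax (pre ++ (A ::ₘ Γ, B ::ₘ Δ) :: post, ep) →
      LM Ax (pre ++ (Γ, Fm.imp A B ::ₘ Δ) :: post, ep)
  | wkL {pre post ep Γ Δ A} :
      LM Ax (pre ++ (Γ, Δ) :: post, ep) →
      LM Ax (pre ++ (A ::ₘ Γ, Δ) :: post, ep)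
  | wkR {pre post ep Γ Δ A} :
      LM Ax (pre ++ (Γ, Δ) :: post, ep) →
      LM Ax (pre ++ (Γ, A ::ₘ Δ) :: post, ep)
  | conL {pre post ep Γ Δ A} :
      LM Ax (pre ++ (A ::ₘ A ::ₘ Γ, Δ) :: post, ep) →
      LM Ax (pre ++ (A ::ₘ Γ, Δ) :: post, ep)
  | conR {pre post ep Γ Δ A} :
      LM Ax (pre ++ (Γ, A ::ₘ A ::ₘ Δ) :: post, ep) →
      LM Ax (pre ++ (Γ, A ::ₘ Δ) :: post, ep)
  | boxRm {G Γ Δ B} :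
      LM Ax (G ++ [(Γ, Δ)], some (0, {B})) →
      LM Ax (G ++ [(Γ, Fm.box B ::ₘ Δ)], none)
  | boxLm {G Γ Δ Sg Pp A} :
      LM Ax (G ++ [(Γ, Δ), (A ::ₘ Sg, Pp)], none) →
      LM Ax (G ++ [(Fm.box A ::ₘ Γ, Δ)], some (Sg, Pp))
  | ruleC {c G Γ Δ} : Ax.c = true →
      LM Ax (c :: G, some (Γ, Δ)) →
      LM Ax ((c :: G) ++ [(Γ, Δ)], none)
  | ruleN {c G Γ Δ} : (Ax.n = true ∨ Ax.five = true) →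
      LM Ax ((c :: G) ++ [(Γ, Δ)], none) →
      LM Ax (c :: G, some (Γ, Δ))
  | ruleP {G Γ Δ} : Ax.p = true →
      LM Ax (G ++ [(Γ, Δ)], some (0, 0)) →
      LM Ax (G ++ [(Γ, Δ)], none)
  | ruleD {G Γ Δ A} : Ax.d = true →
      LM Ax (G ++ [(Γ, Δ)], some ({A}, 0)) →
      LM Ax (G ++ [(Fm.box A ::ₘ Γ, Δ)], none)
  | ruleT {G Γ Δ Sg Pp} : Ax.t = true →
      LM Ax (G ++ [(Γ, Δ)], some (Sg, Pp)) →
      LM Ax (G ++ [(Γ + Sg, Δ + Pp)], none)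
  | rule4 {G Γ Δ Sg Pp A} : Ax.four = true →
      LM Ax (G ++ [(Γ, Δ), (Fm.box A ::ₘ Sg, Pp)], none) →
      LM Ax (G ++ [(Fm.box A ::ₘ Γ, Δ)], some (Sg, Pp))
  | rule5 {G Γ Δ Sg Pp A} : Ax.five = true →
      LM Ax (G ++ [(Γ, Δ), (Sg, Fm.box A ::ₘ Pp)], none) →
      LM Ax (G ++ [(Γ, Fm.box A ::ₘ Δ)], some (Sg, Pp))

/-!
Soundness. A prefix `G` of a linear nested sequent is read as a theory: the formulas `A` for which
`G ⫽ A` is valid. If `C` is available, passing under a component `X` relates the inner theory to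
the outer one by `X ∨ □A`; otherwise `□` does not distribute over the premises and all one can say
is that `X` already holds outside, or `A` is a theorem. Either way a theory is obtained, so the
propositional rules are sound in every component.

Completeness. The worlds of a canonical neighbourhood model are the maximal sets of signed formulas
that contain no derivable component. Since there is no cut, a world may decide a formula in neither
way, but the rules still make truth agree with both signs. The neighbourhoods of `w` are generated
by the lists `Γ` of formulas which the rules for `⫽ᵐ` can extract from `w`: at most one formula
unless `C` is available, and at least one unless `N` is.
-/

variable {Ax : MAx}

/-! ### Soundness -/

/-- A theory over `M𝒜`: a set of formulas containing all theorems and closed under modus ponens,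
but not necessarily under the congruence rule. -/
structure IsTheory (Ax : MAx) (T : Set Fm) : Prop where
  mem_of_mthm {A : Fm} : MThm Ax A → A ∈ T
  mp {A B : Fm} : .imp A B ∈ T → A ∈ T → B ∈ T

theorem isTheory_setOf_mthm : IsTheory Ax {A | MThm Ax A} := ⟨id, .mp⟩

namespace IsTheory

variable {T : Set Fm}

theorem mem_of_entails (hT : IsTheory Ax T) {l : List Fm} {B : Fm} (hl : ∀ A ∈ l, A ∈ T)
    (h : ∀ v, (∀ A ∈ l, evalP v A) → evalP v B) : B ∈ T := by
  induction l generalizing B with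
  | nil => exact hT.mem_of_mthm (.taut fun v => h v (by simp))
  | cons A l ih =>
    rw [List.forall_mem_cons] at hl
    refine hT.mp (ih (B := .imp A B) hl.2 fun v hv hA => h v ?_) hl.1
    exact List.forall_mem_cons.2 ⟨hA, hv⟩

theorem mem_of_mem_of_imp (hT : IsTheory Ax T) {A B : Fm} (hA : A ∈ T)
    (h : MThm Ax (.imp A B)) : B ∈ T :=
  hT.mp (hT.mem_of_mthm h) hA

end IsTheory

namespace MThm

variable {A B C : Fm}

theorem of_entails (hA : MThm Ax A) (h : ∀ v, evalP v A → evalP v B) : MThm Ax B :=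
  .mp (.taut (A := .imp A B) h) hA

theorem of_entails₂ (hA : MThm Ax A) (hB : MThm Ax B)
    (h : ∀ v, evalP v A → evalP v B → evalP v C) : MThm Ax C :=
  .mp (hA.of_entails (B := .imp B C) h) hB

theorem box_mono (h : MThm Ax (.imp A B)) : MThm Ax (.imp (.box A) (.box B)) := by
  have box_and : MThm Ax (.imp (.box A) (.box (.and A B))) :=
    .cong (h.of_entails fun _ hAB hA => ⟨hA, hAB hA⟩) (.taut fun _ => And.left)
  exact box_and.of_entails₂ .axM fun _ hl hr hA => (hr (hl hA)).2

theorem box_mono₂ (hc : Ax.c = true) (h : MThm Ax (.imp A (.imp B C))) :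
    MThm Ax (.imp (.box A) (.imp (.box B) (.box C))) := by
  have box_and : MThm Ax (.imp (.box (.and A B)) (.box C)) :=
    (h.of_entails fun _ hABC hAB => hABC hAB.1 hAB.2 : MThm Ax (.imp (.and A B) C)).box_mono
  exact box_and.of_entails₂ (.axC hc) fun v hl hr hA hB => hl (hr ⟨hA, hB⟩)

theorem box_top (h : Ax.n = true ∨ Ax.five = true) : MThm Ax (.box .top) := by
  rcases h with hn | h5
  · exact .axN hn
  · have box_mono_top : MThm Ax (.imp (.box (.neg (.box .top))) (.box .top)) :=
      box_mono (.taut fun _ _ => trivial)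
    exact box_mono_top.of_entails₂ (.ax5 (A := .top) h5) fun _ hl hr => hr.elim id hl

end MThm

/-- The formula expressing that `A` is valid under a component with formula `X`. Without `C` the
nesting `⫽` has no formula counterpart, and only the component `X` itself is kept. -/
def nest (Ax : MAx) (X A : Fm) : Fm := if Ax.c then .or X (.box A) else X

theorem exists_evalP_nest_iff (Ax : MAx) (A : Fm) :
    ∃ R, ∀ v X, evalP v (nest Ax X A) ↔ evalP v X ∨ evalP v R := by
  unfold nest
  split
  · exact ⟨.box A, fun _ _ => Iff.rfl⟩
  · exact ⟨.bot, fun _ _ => (or_iff_left id).symm⟩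

namespace MThm

variable {A B C X : Fm}

theorem nest_mono₂ (h : MThm Ax (.imp A (.imp B C))) :
    MThm Ax (.imp (nest Ax X A) (.imp (nest Ax X B) (nest Ax X C))) := by
  unfold nest
  split
  next hc => exact (box_mono₂ hc h).of_entails fun v => by simp only [evalP]; tauto
  next => exact .taut fun _ hX _ => hX

theorem nest_mono (h : MThm Ax (.imp A B)) : MThm Ax (.imp (nest Ax X A) (nest Ax X B)) :=
  (nest_mono₂ (h.of_entails fun _ hAB hA _ => hAB hA : MThm Ax (.imp A (.imp A B)))).of_entails
    fun _ hAAB hA => hAAB hA hA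

end MThm

/-- The theory holding under a component with formula `X` that is placed in the theory `T`. -/
def nestedTheory (Ax : MAx) (T : Set Fm) (X : Fm) : Set Fm :=
  {A | MThm Ax A ∨ nest Ax X A ∈ T}

theorem iInter_nestedTheory_subset {ι : Sort*} {T : Set Fm} {T' : ι → Set Fm} {X : Fm}
    {X' : ι → Fm} (h : ∀ A, (∀ i, nest Ax (X' i) A ∈ T' i) → nest Ax X A ∈ T) :
    ⋂ i, nestedTheory Ax (T' i) (X' i) ⊆ nestedTheory Ax T X := by
  intro A hA
  rw [Set.mem_iInter] at hA
  by_cases hthm : MThm Ax A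
  · exact .inl hthm
  · exact .inr (h A fun i => (hA i).resolve_left hthm)

namespace IsTheory

variable {T : Set Fm} {B E X Y Z : Fm}

protected theorem nestedTheory (hT : IsTheory Ax T) (X : Fm) :
    IsTheory Ax (nestedTheory Ax T X) where
  mem_of_mthm := .inl
  mp {A B} := by
    rintro (hAB | hAB) (hA | hA)
    · exact .inl (hAB.mp hA)
    · exact .inr (hT.mem_of_mem_of_imp hA hAB.nest_mono)
    · have eval_imp : MThm Ax (.imp (.imp A B) B) := hA.of_entails fun _ hA hAB => hAB hA
      exact .inr (hT.mem_of_mem_of_imp hAB eval_imp.nest_mono)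
    · have modus_ponens : MThm Ax (.imp (.imp A B) (.imp A B)) := .taut fun _ => id
      exact .inr (hT.mp (hT.mem_of_mem_of_imp hAB modus_ponens.nest_mono₂) hA)

/-- The common shape of the rules that turn `⫽` into `⫽ᵐ`: they differ only in the formula `B`
moved into the box. -/
theorem or_box_mem_of_mem_nestedTheory (hT : IsTheory Ax T) (hZ : Z ∈ nestedTheory Ax T X)
    (hXY : MThm Ax (.imp X Y)) (hYB : MThm Ax (.or Y (.box B)))
    (hZE : MThm Ax (.imp Z (.imp B E))) : .or Y (.box E) ∈ T := by
  rcases hZ with hZ | hZ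
  · have box_mono : MThm Ax (.imp (.box B) (.box E)) := (hZE.mp hZ).box_mono
    exact hT.mem_of_mthm (hYB.of_entails₂ box_mono fun _ hYB hBE => hYB.imp_right hBE)
  · refine hT.mem_of_mem_of_imp hZ ?_
    unfold nest
    split
    next hc =>
      have h := hYB.of_entails₂ (hZE.box_mono₂ hc)
        (C := .imp (.box Z) (.or Y (.box E))) fun v => by simp only [evalP]; tauto
      exact hXY.of_entails₂ h fun v => by simp only [evalP]; tauto
    next => exact hXY.of_entails fun _ hXY hX => .inl (hXY hX)

end IsTheory

/-- The formula `⋀ Γ → ⋁ Δ` of a component `Γ ⇒ Δ`. -/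
noncomputable def Cmp.toFm (X : Cmp) : Fm :=
  .imp (X.1.toList.foldr .and .top) (X.2.toList.foldr .or .bot)

theorem evalP_toFm {v : Fm → Prop} {X : Cmp} :
    evalP v (Cmp.toFm X) ↔ ((∀ A ∈ X.1, evalP v A) → ∃ A ∈ X.2, evalP v A) := by
  have evalP_conj (l : List Fm) : evalP v (l.foldr .and .top) ↔ ∀ A ∈ l, evalP v A := by
    induction l <;> simp_all [evalP]
  have evalP_disj (l : List Fm) : evalP v (l.foldr .or .bot) ↔ ∃ A ∈ l, evalP v A := by
    induction l <;> simp_all [evalP]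
  simp only [Cmp.toFm, evalP, evalP_conj, evalP_disj, Multiset.mem_toList]

/-- Validity of a linear nested sequent in a theory. The empty list of components, which never
occurs in a derivation, counts as valid. -/
def Valid (Ax : MAx) : Set Fm → List Cmp → Option Cmp → Prop
  | _, [], _ => True
  | T, [X], none => Cmp.toFm X ∈ T
  | T, [X], some E => .or (Cmp.toFm X) (.box (Cmp.toFm E)) ∈ T
  | T, X :: Y :: L, ep => Valid Ax (nestedTheory Ax T (Cmp.toFm X)) (Y :: L) ep

/-- The theory holding after the components `G` in the theory `T`. -/
def contextTheory (Ax : MAx) (T : Set Fm) (G : List Cmp) : Set Fm :=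
  G.foldl (fun T X => nestedTheory Ax T (Cmp.toFm X)) T

theorem IsTheory.contextTheory {T : Set Fm} (hT : IsTheory Ax T) (G : List Cmp) :
    IsTheory Ax (contextTheory Ax T G) := by
  induction G generalizing T with
  | nil => exact hT
  | cons X _ ih => exact ih (hT.nestedTheory _)

theorem valid_append {T : Set Fm} {G L : List Cmp} {X : Cmp} {ep : Option Cmp} :
    Valid Ax T (G ++ X :: L) ep ↔ Valid Ax (contextTheory Ax T G) (X :: L) ep := by
  induction G generalizing T with
  | nil => rfl
  | cons Y G ih => cases G <;> exact ih

theorem Valid.of_iInter_subset {ι : Sort*} {T : Set Fm} {T' : ι → Set Fm} {L : List Cmp}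
    {ep : Option Cmp} (hT : ⋂ i, T' i ⊆ T) (h : ∀ i, Valid Ax (T' i) L ep) :
    Valid Ax T L ep := by
  induction L generalizing T T' with
  | nil => trivial
  | cons X L ih =>
    cases L with
    | nil => cases ep <;> exact hT (Set.mem_iInter.2 h)
    | cons Y L => exact ih (iInter_nestedTheory_subset fun _ hA => hT (Set.mem_iInter.2 hA)) h

theorem Valid.of_entails {T : Set Fm} (hT : IsTheory Ax T) {l : List Cmp} {X : Cmp}
    {L : List Cmp} {ep : Option Cmp} (hl : ∀ Y ∈ l, Valid Ax T (Y :: L) ep)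
    (h : ∀ v, (∀ Y ∈ l, evalP v (Cmp.toFm Y)) → evalP v (Cmp.toFm X)) :
    Valid Ax T (X :: L) ep := by
  have mem_of_forall {f : Fm → Fm} {R : Fm}
      (hf : ∀ v Y, evalP v (f Y) ↔ evalP v Y ∨ evalP v R)
      (hl : ∀ Y ∈ l, f (Cmp.toFm Y) ∈ T) : f (Cmp.toFm X) ∈ T := by
    refine hT.mem_of_entails (List.forall_mem_map.2 hl) fun v hv => (hf v _).2 ?_
    by_cases hR : evalP v R
    · exact .inr hR
    · refine .inl (h v fun Y hY => ?_)
      exact ((hf v _).1 (hv _ (List.mem_map_of_mem hY))).resolve_right hR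
  match L, ep with
  | [], none => exact mem_of_forall (f := id) (R := .bot) (fun _ _ => (or_iff_left id).symm) hl
  | [], some E => exact mem_of_forall (f := (.or · (.box (Cmp.toFm E)))) (fun _ _ => Iff.rfl) hl
  | Z :: L, ep =>
    have nested_subset : ⋂ Y : {Y // Y ∈ l}, nestedTheory Ax T (Cmp.toFm Y.1) ⊆
        nestedTheory Ax T (Cmp.toFm X) := by
      refine iInter_nestedTheory_subset fun A hA => ?_
      obtain ⟨R, hR⟩ := exists_evalP_nest_iff Ax A
      exact mem_of_forall (f := (nest Ax · A)) hR fun Y hY => hA ⟨Y, hY⟩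
    have h_nested : Valid Ax (nestedTheory Ax T (Cmp.toFm X)) (Z :: L) ep :=
      .of_iInter_subset nested_subset fun Y => hl Y.1 Y.2
    exact h_nested

namespace MThm

theorem box_toFm_singleton_right {B : Fm} :
    MThm Ax (.imp (.box (Cmp.toFm (0, {B}))) (.box B)) :=
  box_mono (.taut fun v => by simp [evalP, evalP_toFm])

theorem box_toFm_zero (hp : Ax.p = true) : MThm Ax (.imp (.box (Cmp.toFm (0, 0))) .bot) := by
  have box_bot : MThm Ax (.imp (.box (Cmp.toFm (0, 0))) (.box .bot)) :=
    box_mono (.taut fun v => by simp [evalP, evalP_toFm])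
  exact box_bot.of_entails₂ (.axP hp) fun _ h hbot hbox => hbot (h hbox)

theorem box_toFm_singleton_left {A : Fm} (hd : Ax.d = true) :
    MThm Ax (.imp (.box (Cmp.toFm ({A}, 0))) (.neg (.box A))) := by
  have box_neg : MThm Ax (.imp (.box (Cmp.toFm ({A}, 0))) (.box (.neg A))) :=
    box_mono (.taut fun v => by simp [evalP, evalP_toFm])
  exact box_neg.of_entails₂ (.axD hd) fun _ h hd hbox hA => hd ⟨hA, h hbox⟩

end MThm

namespace Valid

variable {T : Set Fm} {G L : List Cmp} {X Y E : Cmp} {ep : Option Cmp} {Γ Δ Θ Ξ : Multiset Fm}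
  {A B F : Fm}

theorem of_append_entails (hT : IsTheory Ax T) {l : List Cmp}
    (hl : ∀ Y ∈ l, Valid Ax T (G ++ Y :: L) ep)
    (h : ∀ v, (∀ Y ∈ l, evalP v (Cmp.toFm Y)) → evalP v (Cmp.toFm X)) :
    Valid Ax T (G ++ X :: L) ep :=
  valid_append.2 (.of_entails (hT.contextTheory G) (fun Y hY => valid_append.1 (hl Y hY)) h)

/-- The common shape of the rules whose premise ends in `⫽ᵐ E` and whose conclusion does not: they
differ only in the consequence `F` drawn from `□E`. -/
theorem of_box_imp (hT : IsTheory Ax T) (hE : Valid Ax T (G ++ [X]) (some E))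
    (hEF : MThm Ax (.imp (.box (Cmp.toFm E)) F))
    (h : ∀ v, evalP v (Cmp.toFm X) ∨ evalP v F → evalP v (Cmp.toFm Y)) :
    Valid Ax T (G ++ [Y]) none := by
  rw [valid_append] at hE ⊢
  refine (hT.contextTheory G).mem_of_mem_of_imp hE ?_
  exact hEF.of_entails fun v hEF hXE => h v (hXE.imp_right hEF)

theorem nested_of_some (hc : Ax.c = true) (h : Valid Ax T (G ++ [X]) (some E)) :
    Valid Ax T (G ++ [X, E]) none := by
  rw [valid_append] at h ⊢
  exact .inr (by rwa [nest, if_pos hc])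

theorem some_of_nested (hT : IsTheory Ax T) (hn : Ax.n = true ∨ Ax.five = true)
    (h : Valid Ax T (G ++ [X, E]) none) : Valid Ax T (G ++ [X]) (some E) := by
  rw [valid_append] at h ⊢
  exact (hT.contextTheory G).or_box_mem_of_mem_nestedTheory h (.taut fun _ => id)
    ((MThm.box_top hn).of_entails fun _ => .inr) (.taut fun _ hE _ => hE)

theorem box_left (hT : IsTheory Ax T) (hAB : MThm Ax (.imp (.box A) (.box B)))
    (h : Valid Ax T (G ++ [(Γ, Δ), (B ::ₘ Θ, Ξ)]) none) :
    Valid Ax T (G ++ [(.box A ::ₘ Γ, Δ)]) (some (Θ, Ξ)) := by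
  rw [valid_append] at h ⊢
  refine (hT.contextTheory G).or_box_mem_of_mem_nestedTheory (B := B) h
    (.taut fun v => ?_) (hAB.of_entails fun v => ?_) (.taut fun v => ?_)
  all_goals
    simp only [evalP, evalP_toFm, Multiset.mem_cons, forall_eq_or_imp]
    tauto

theorem box_right (hT : IsTheory Ax T) (h5 : Ax.five = true)
    (h : Valid Ax T (G ++ [(Γ, Δ), (Θ, .box A ::ₘ Ξ)]) none) :
    Valid Ax T (G ++ [(Γ, .box A ::ₘ Δ)]) (some (Θ, Ξ)) := by
  rw [valid_append] at h ⊢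
  refine (hT.contextTheory G).or_box_mem_of_mem_nestedTheory (B := .neg (.box A)) h
    (.taut fun v => ?_) (MThm.of_entails (.ax5 (A := A) h5) fun v => ?_) (.taut fun v => ?_)
  all_goals
    simp only [evalP, evalP_toFm, Multiset.mem_cons, exists_eq_or_imp]
    tauto

end Valid

theorem LM.valid {S : LNSm} (h : LM Ax S) {T : Set Fm} (hT : IsTheory Ax T) :
    Valid Ax T S.1 S.2 := by
  induction h with
  | init | botL | topR =>
    refine .of_append_entails hT (l := []) (List.forall_mem_nil _) fun v _ => ?_
    simp only [evalP_toFm, Multiset.mem_cons, forall_eq_or_imp, exists_eq_or_imp, evalP]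
    tauto
  | negL _ ih | negR _ ih | andL _ ih | orR _ ih | impR _ ih | wkL _ ih | wkR _ ih | conL _ ih
  | conR _ ih =>
    refine .of_append_entails hT (List.forall_mem_singleton.2 ih) fun v => ?_
    simp only [evalP_toFm, List.forall_mem_singleton, Multiset.mem_cons, forall_eq_or_imp,
      exists_eq_or_imp, evalP]
    tauto
  | andR _ _ ih₁ ih₂ | orL _ _ ih₁ ih₂ | impL _ _ ih₁ ih₂ =>
    refine .of_append_entails hT (l := [_, _]) (by simpa using ⟨ih₁, ih₂⟩) fun v => ?_
    simp only [evalP_toFm, List.forall_mem_cons, Multiset.mem_cons, forall_eq_or_imp,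
      exists_eq_or_imp, evalP]
    tauto
  | boxRm _ ih =>
    refine .of_box_imp hT ih MThm.box_toFm_singleton_right fun v => ?_
    simp only [evalP_toFm, Multiset.mem_cons, exists_eq_or_imp, evalP]
    tauto
  | ruleP hp _ ih => exact .of_box_imp hT ih (MThm.box_toFm_zero hp) fun _ => (·.resolve_right id)
  | ruleD hd _ ih =>
    refine .of_box_imp hT ih (MThm.box_toFm_singleton_left hd) fun v => ?_
    simp only [evalP_toFm, Multiset.mem_cons, forall_eq_or_imp, evalP]
    tauto
  | ruleT ht _ ih =>
    refine .of_box_imp hT ih (.axT ht) fun v => ?_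
    simp only [evalP_toFm, Multiset.mem_add, or_imp, forall_and, or_and_right, exists_or]
    exact ⟨fun h hΓ => .inl (h hΓ.1), fun h hΓ => .inr (h hΓ.2)⟩
  | @ruleC c G _ _ hc _ ih =>
    obtain ⟨G', X, hG⟩ := (List.eq_nil_or_concat' (c :: G)).resolve_left (List.cons_ne_nil c G)
    rw [hG] at ih ⊢
    simpa using ih.nested_of_some hc
  | @ruleN c G _ _ hn _ ih =>
    obtain ⟨G', X, hG⟩ := (List.eq_nil_or_concat' (c :: G)).resolve_left (List.cons_ne_nil c G)
    rw [hG] at ih ⊢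
    exact .some_of_nested hT hn (by simpa using ih)
  | boxLm _ ih => exact ih.box_left hT (.taut fun _ => id)
  | rule4 h4 _ ih => exact ih.box_left hT (.ax4 h4)
  | rule5 h5 _ ih => exact ih.box_right hT h5

theorem LM.mthm {A : Fm} (h : LM Ax ([(0, {A})], none)) : MThm Ax A :=
  MThm.of_entails (h.valid isTheory_setOf_mthm) fun v => by simp [evalP_toFm]
/-! ### Completeness -/

/-- A formula signed by the side of the sequent on which it occurs: `true` for the left-hand side,
where it is asserted, and `false` for the right-hand side, where it is denied. -/
abbrev SignedFm := Bool × Fm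

/-- The component consisting of a list of signed formulas. -/
def toCmp : List SignedFm → Cmp
  | [] => (0, 0)
  | (true, A) :: L => (A ::ₘ (toCmp L).1, (toCmp L).2)
  | (false, A) :: L => ((toCmp L).1, A ::ₘ (toCmp L).2)

theorem toCmp_perm {L L' : List SignedFm} (h : L.Perm L') : toCmp L = toCmp L' := by
  induction h with
  | nil => rfl
  | cons s _ ih => rcases s with ⟨_ | _, A⟩ <;> simp [toCmp, ih]
  | swap s s' L =>
    rcases s with ⟨_ | _, A⟩ <;> rcases s' with ⟨_ | _, B⟩ <;> simp [toCmp, Multiset.cons_swap]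
  | trans _ _ ih₁ ih₂ => exact ih₁.trans ih₂

namespace LM

variable {G post : List Cmp} {ep : Option Cmp} {L L' : List SignedFm} {s : SignedFm}

theorem weaken (h : LM Ax (G ++ toCmp L :: post, ep)) :
    LM Ax (G ++ toCmp (s :: L) :: post, ep) := by
  rcases s with ⟨_ | _, A⟩
  exacts [.wkR h, .wkL h]

theorem contract (h : LM Ax (G ++ toCmp (s :: s :: L) :: post, ep)) :
    LM Ax (G ++ toCmp (s :: L) :: post, ep) := by
  rcases s with ⟨_ | _, A⟩
  exacts [.conR h, .conL h]

theorem of_subset (hL : L ⊆ L') (h : LM Ax (G ++ toCmp L :: post, ep)) :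
    LM Ax (G ++ toCmp L' :: post, ep) := by
  have weakened (M : List SignedFm) : LM Ax (G ++ toCmp (M ++ L) :: post, ep) := by
    induction M with
    | nil => exact h
    | cons s M ih => exact ih.weaken
  have contracted (M : List SignedFm) (hM : M ⊆ L')
      (h : LM Ax (G ++ toCmp (M ++ L') :: post, ep)) : LM Ax (G ++ toCmp L' :: post, ep) := by
    induction M with
    | nil => exact h
    | cons s M ih =>
      rw [List.cons_subset] at hM
      obtain ⟨l₁, l₂, hl⟩ := List.append_of_mem (List.mem_append_right M hM.1)
      have s_first : (M ++ L').Perm (s :: (l₁ ++ l₂)) := hl ▸ List.perm_middle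
      rw [List.cons_append, toCmp_perm (s_first.cons s)] at h
      exact ih hM.2 (toCmp_perm s_first ▸ h.contract)
  exact contracted L hL (toCmp_perm List.perm_append_comm ▸ weakened L')

theorem ruleC_append {X E : Cmp} (hc : Ax.c = true) (h : LM Ax (G ++ [X], some E)) :
    LM Ax (G ++ [X, E], none) := by
  cases G with
  | nil => exact .ruleC (G := []) hc h
  | cons Y G => simpa using LM.ruleC hc h

theorem ruleN_append {X E : Cmp} (hn : Ax.n = true) (h : LM Ax (G ++ [X, E], none)) :
    LM Ax (G ++ [X], some E) := by
  cases G with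
  | nil => exact .ruleN (G := []) (.inl hn) h
  | cons Y G => exact .ruleN (.inl hn) (by simpa using h)

end LM

/-- `W` refutes the rest `⫽ post ⫽ᵐ ep` of a linear nested sequent: some component consisting of
formulas in `W`, followed by this rest, is derivable in every context. -/
def Refutable (Ax : MAx) (W : Set SignedFm) (post : List Cmp) (ep : Option Cmp) : Prop :=
  ∃ L : List SignedFm, (∀ s ∈ L, s ∈ W) ∧ ∀ G, LM Ax (G ++ toCmp L :: post, ep)

namespace Refutable

variable {W W' : Set SignedFm} {post : List Cmp} {ep : Option Cmp} {s : SignedFm}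

theorem mono (hW : W ⊆ W') (h : Refutable Ax W post ep) : Refutable Ax W' post ep :=
  let ⟨L, hL, hder⟩ := h
  ⟨L, fun s hs => hW (hL s hs), hder⟩

theorem exists_cons (h : Refutable Ax (insert s W) post ep) :
    ∃ L : List SignedFm, (∀ s ∈ L, s ∈ W) ∧ ∀ G, LM Ax (G ++ toCmp (s :: L) :: post, ep) := by
  classical
  obtain ⟨L, hL, hder⟩ := h
  refine ⟨L.filter (· ≠ s), fun s' hs' => ?_, fun G => (hder G).of_subset fun s' hs' => ?_⟩
  · rw [List.mem_filter, decide_eq_true_iff] at hs'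
    exact (hL s' hs'.1).resolve_left hs'.2
  · by_cases h : s' = s
    · exact h ▸ List.mem_cons_self
    · exact List.mem_cons_of_mem s (List.mem_filter.2 ⟨hs', decide_eq_true h⟩)

end Refutable

/-- A world of the canonical model: a maximal set of signed formulas that contains no derivable
component. -/
def World (Ax : MAx) : Type := {w : Set SignedFm // Maximal (fun W => ¬ Refutable Ax W [] none) w}

theorem exists_world_of_not_refutable {W : Set SignedFm} (hW : ¬ Refutable Ax W [] none) :
    ∃ w : World Ax, W ⊆ w.1 := by
  have finite_character : Order.IsOfFiniteCharacter {W | ¬ Refutable Ax W [] none} := by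
    intro W
    refine ⟨fun h W' hW' _ href => h (href.mono hW'), fun h ⟨L, hL, hder⟩ => ?_⟩
    exact h (y := {s | s ∈ L}) hL L.finite_toSet ⟨L, fun _ => id, hder⟩
  obtain ⟨w, hWw, hw⟩ := finite_character.exists_maximal hW
  exact ⟨⟨w, hw⟩, hWw⟩

namespace World

variable {w : World Ax} {s s₁ s₂ : SignedFm}

theorem refutable_insert (hs : s ∉ w.1) : Refutable Ax (insert s w.1) [] none :=
  not_not.1 fun h => hs (w.2.mem_of_prop_insert h)

/-- Each rule whose premises replace `s` by `s₁` or `s₂` yields a closure property of worlds. -/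
theorem mem_or_mem_of_rule (hs : s ∈ w.1)
    (h : ∀ L, (∀ G, LM Ax (G ++ [toCmp (s₁ :: L)], none)) →
      (∀ G, LM Ax (G ++ [toCmp (s₂ :: L)], none)) → ∀ G, LM Ax (G ++ [toCmp (s :: L)], none)) :
    s₁ ∈ w.1 ∨ s₂ ∈ w.1 := by
  by_contra! hnot
  obtain ⟨L₁, hL₁, hder₁⟩ := (refutable_insert hnot.1).exists_cons
  obtain ⟨L₂, hL₂, hder₂⟩ := (refutable_insert hnot.2).exists_cons
  have hL : ∀ s' ∈ s :: (L₁ ++ L₂), s' ∈ w.1 :=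
    List.forall_mem_cons.2 ⟨hs, List.forall_mem_append.2 ⟨hL₁, hL₂⟩⟩
  refine w.2.prop ⟨s :: (L₁ ++ L₂), hL, h _ (fun G => ?_) (fun G => ?_)⟩
  · exact (hder₁ G).of_subset (List.cons_subset_cons _ (List.subset_append_left _ _))
  · exact (hder₂ G).of_subset (List.cons_subset_cons _ (List.subset_append_right _ _))

theorem mem_of_rule (hs : s ∈ w.1) (h : ∀ L, (∀ G, LM Ax (G ++ [toCmp (s₁ :: L)], none)) →
    ∀ G, LM Ax (G ++ [toCmp (s :: L)], none)) : s₁ ∈ w.1 :=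
  or_self_iff.1 (mem_or_mem_of_rule hs fun L h₁ _ => h L h₁)

theorem mem_and_mem_of_rule (hs : s ∈ w.1)
    (h : ∀ L, (∀ G, LM Ax (G ++ [toCmp (s₁ :: s₂ :: L)], none)) →
      ∀ G, LM Ax (G ++ [toCmp (s :: L)], none)) : s₁ ∈ w.1 ∧ s₂ ∈ w.1 := by
  refine ⟨mem_of_rule hs fun L hL => h L fun G => ?_, mem_of_rule hs fun L hL => h L fun G => ?_⟩
  · exact (hL G).of_subset (List.cons_subset_cons _ (List.subset_cons_self _ _))
  · exact (hL G).of_subset (List.subset_cons_self _ _)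

end World

theorem LM.of_forall_world {L : List SignedFm}
    (h : ∀ w : World Ax, ∃ s ∈ L, s ∉ w.1) (G : List Cmp) : LM Ax (G ++ [toCmp L], none) := by
  obtain ⟨M, hM, hder⟩ : Refutable Ax {s | s ∈ L} [] none := by
    by_contra hnot
    obtain ⟨w, hw⟩ := exists_world_of_not_refutable hnot
    obtain ⟨s, hs, hsw⟩ := h w
    exact hsw (hw hs)
  exact (hder G).of_subset hM
/-- The formulas `B` that some rule moves from a component included in `W` into the nesting `⫽ᵐ`
that follows it: by `□_L^m` if `□B` lies in `W`, by the rule `4` if `B` is boxed and itself lies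
in `W`. -/
def Unboxable (Ax : MAx) (W : Set SignedFm) (B : Fm) : Prop :=
  (true, .box B) ∈ W ∨ (Ax.four = true ∧ (true, B) ∈ W ∧ ∃ A, B = .box A)

namespace Refutable

variable {W : Set SignedFm} {E : List SignedFm} {A B : Fm}

theorem unbox (hB : Unboxable Ax W B) (h : Refutable Ax W [toCmp ((true, B) :: E)] none) :
    Refutable Ax W [] (some (toCmp E)) := by
  obtain ⟨L, hL, hder⟩ := h
  rcases hB with hB | ⟨h4, hB, A, rfl⟩
  · exact ⟨_ :: L, List.forall_mem_cons.2 ⟨hB, hL⟩, fun G => .boxLm (hder G)⟩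
  · exact ⟨_ :: L, List.forall_mem_cons.2 ⟨hB, hL⟩, fun G => .rule4 h4 (hder G)⟩

theorem unbox_append {Γ : List Fm} (hc : Γ ≠ [] → Ax.c = true) (hΓ : ∀ B ∈ Γ, Unboxable Ax W B)
    (h : Refutable Ax W [] (some (toCmp (Γ.map (true, ·) ++ E)))) :
    Refutable Ax W [] (some (toCmp E)) := by
  induction Γ with
  | nil => exact h
  | cons B Γ ih =>
    rw [List.forall_mem_cons] at hΓ
    have hc : Ax.c = true := hc (List.cons_ne_nil B Γ)
    obtain ⟨L, hL, hder⟩ := h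
    exact ih (fun _ => hc) hΓ.2 (unbox hΓ.1 ⟨L, hL, fun G => (hder G).ruleC_append hc⟩)

theorem of_some_nil (hp : Ax.p = true) (h : Refutable Ax W [] (some (toCmp []))) :
    Refutable Ax W [] none :=
  let ⟨L, hL, hder⟩ := h
  ⟨L, hL, fun G => .ruleP hp (hder G)⟩

theorem of_some_of_box_mem (hd : Ax.d = true) (hA : (true, .box A) ∈ W)
    (h : Refutable Ax W [] (some (toCmp [(true, A)]))) : Refutable Ax W [] none :=
  let ⟨L, hL, hder⟩ := h
  ⟨_ :: L, List.forall_mem_cons.2 ⟨hA, hL⟩, fun G => .ruleD hd (hder G)⟩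

theorem of_some_of_box_denied (hB : (false, .box B) ∈ W)
    (h : Refutable Ax W [] (some (toCmp [(false, B)]))) : Refutable Ax W [] none :=
  let ⟨L, hL, hder⟩ := h
  ⟨_ :: L, List.forall_mem_cons.2 ⟨hB, hL⟩, fun G => .boxRm (hder G)⟩

end Refutable

theorem World.mem_of_box_mem {w : World Ax} {A : Fm} (ht : Ax.t = true)
    (h : (true, .box A) ∈ w.1) : (true, A) ∈ w.1 := by
  refine mem_of_rule h fun L hA G => ?_
  have nested : LM Ax (G ++ [toCmp [], toCmp ((true, A) :: L)], none) := by
    simpa using hA (G ++ [toCmp []])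
  have boxed : LM Ax (G ++ [({.box A}, 0)], some (toCmp L)) := .boxLm nested
  simpa [toCmp] using LM.ruleT ht boxed

/-- The worlds asserting every formula of `Γ`. -/
def cone (Ax : MAx) (Γ : List Fm) : Set (World Ax) := {v | ∀ B ∈ Γ, (true, B) ∈ v.1}

/-- The lists of formulas whose cones generate the neighbourhoods of `w`. -/
structure IsBasis (w : World Ax) (Γ : List Fm) : Prop where
  n : Γ = [] → Ax.n = true
  c : Ax.c = false → Γ.length ≤ 1
  unboxable : ∀ B ∈ Γ, Unboxable Ax w.1 B

theorem isBasis_singleton {w : World Ax} {B : Fm} (hB : Unboxable Ax w.1 B) : IsBasis w [B] where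
  n h := absurd h (List.cons_ne_nil B [])
  c _ := le_rfl
  unboxable := List.forall_mem_singleton.2 hB

namespace IsBasis

variable {w : World Ax} {Γ Γ₁ Γ₂ : List Fm} {E : List SignedFm} {B : Fm}

theorem append (hc : Ax.c = true) (h₁ : IsBasis w Γ₁) (h₂ : IsBasis w Γ₂) :
    IsBasis w (Γ₁ ++ Γ₂) where
  n h := h₁.n (List.append_eq_nil_iff.1 h).1
  c h := by simp [hc] at h
  unboxable := List.forall_mem_append.2 ⟨h₁.unboxable, h₂.unboxable⟩

theorem refutable_of_forall_cone (hΓ : IsBasis w Γ) (h : ∀ v ∈ cone Ax Γ, ∃ s ∈ E, s ∉ v.1) :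
    Refutable Ax w.1 [] (some (toCmp E)) := by
  have hder : ∀ G, LM Ax (G ++ [toCmp [], toCmp (Γ.map (true, ·) ++ E)], none) := by
    have no_world (v : World Ax) : ∃ s ∈ Γ.map (true, ·) ++ E, s ∉ v.1 := by
      by_contra! hv
      rw [List.forall_mem_append, List.forall_mem_map] at hv
      obtain ⟨s, hs, hsv⟩ := h v hv.1
      exact hsv (hv.2 s hs)
    exact fun G => by simpa using LM.of_forall_world no_world (G ++ [toCmp []])
  cases Γ with
  | nil => exact ⟨[], by simp, fun G => (hder G).ruleN_append (hΓ.n rfl)⟩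
  | cons B Γ =>
    have ⟨hB, hΓ'⟩ := List.forall_mem_cons.1 hΓ.unboxable
    refine .unbox_append (fun hne => ?_) hΓ' (.unbox hB ⟨[], by simp, hder⟩)
    by_contra hc
    have length_le := hΓ.c (Bool.eq_false_iff.2 hc)
    exact hne (List.length_eq_zero_iff.1 (Nat.le_zero.1 (Nat.le_of_succ_le_succ length_le)))

theorem exists_mem_cone_of_box_denied (hΓ : IsBasis w Γ) (hB : (false, .box B) ∈ w.1) :
    ∃ v ∈ cone Ax Γ, (false, B) ∈ v.1 := by
  by_contra! hcone
  refine w.2.prop (Refutable.of_some_of_box_denied hB (hΓ.refutable_of_forall_cone ?_))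
  exact fun v hv => ⟨(false, B), List.mem_singleton_self _, hcone v hv⟩

theorem cone_nonempty (hp : Ax.p = true) (hΓ : IsBasis w Γ) : (cone Ax Γ).Nonempty := by
  by_contra! hempty
  have refuted : Refutable Ax w.1 [] (some (toCmp [])) :=
    hΓ.refutable_of_forall_cone fun v hv => absurd (hempty ▸ hv) (Set.notMem_empty v)
  exact w.2.prop (refuted.of_some_nil hp)

theorem inter_cone_nonempty_of_box_mem (hd : Ax.d = true) (h₁ : IsBasis w Γ₁)
    (h₂ : IsBasis w Γ₂) (hB : B ∈ Γ₁) (hw : (true, .box B) ∈ w.1) :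
    (cone Ax Γ₁ ∩ cone Ax Γ₂).Nonempty := by
  by_contra! hempty
  refine w.2.prop (Refutable.of_some_of_box_mem hd hw ?_)
  by_cases hc : Ax.c = true
  · refine (h₁.append hc h₂).refutable_of_forall_cone fun v hv => ?_
    exact absurd (hempty ▸ List.forall_mem_append.1 hv : v ∈ ∅) (Set.notMem_empty v)
  · refine h₂.refutable_of_forall_cone fun v hv => ⟨(true, B), List.mem_singleton_self _, ?_⟩
    obtain ⟨B', rfl⟩ : ∃ B', Γ₁ = [B'] :=
      List.length_eq_one_iff.1 <|
        le_antisymm (h₁.c (Bool.eq_false_iff.2 hc)) (List.length_pos_of_mem hB)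
    obtain rfl := List.mem_singleton.1 hB
    exact fun hBv => absurd (hempty ▸ ⟨List.forall_mem_singleton.2 hBv, hv⟩ : v ∈ ∅)
      (Set.notMem_empty v)

theorem mem_cone_of_forall_box_notMem (hΓ : IsBasis w Γ)
    (h : ∀ B ∈ Γ, (true, .box B) ∉ w.1) : w ∈ cone Ax Γ :=
  fun B hB => ((hΓ.unboxable B hB).resolve_left (h B hB)).2.1

theorem inter_cone_nonempty (hd : Ax.d = true) (h₁ : IsBasis w Γ₁) (h₂ : IsBasis w Γ₂) :
    (cone Ax Γ₁ ∩ cone Ax Γ₂).Nonempty := by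
  by_cases hΓ₁ : ∃ B ∈ Γ₁, (true, .box B) ∈ w.1
  · obtain ⟨B, hB, hw⟩ := hΓ₁
    exact h₁.inter_cone_nonempty_of_box_mem hd h₂ hB hw
  by_cases hΓ₂ : ∃ B ∈ Γ₂, (true, .box B) ∈ w.1
  · obtain ⟨B, hB, hw⟩ := hΓ₂
    exact Set.inter_comm (cone Ax Γ₁) _ ▸ h₂.inter_cone_nonempty_of_box_mem hd h₁ hB hw
  push Not at hΓ₁ hΓ₂
  exact ⟨w, h₁.mem_cone_of_forall_box_notMem hΓ₁, h₂.mem_cone_of_forall_box_notMem hΓ₂⟩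

theorem mem_cone (ht : Ax.t = true) (hΓ : IsBasis w Γ) : w ∈ cone Ax Γ := fun B hB =>
  (hΓ.unboxable B hB).elim (World.mem_of_box_mem ht) (·.2.1)

theorem exists_forall_mem_cone_isBasis (h4 : Ax.four = true) (hΓ : IsBasis w Γ) :
    ∃ Γ', IsBasis w Γ' ∧ ∀ v ∈ cone Ax Γ', IsBasis v Γ := by
  have exists_unboxable (B : Fm) (hB : B ∈ Γ) : ∃ B', Unboxable Ax w.1 B' ∧
      ∀ v : World Ax, (true, B') ∈ v.1 → Unboxable Ax v.1 B := by
    obtain hw | ⟨-, hw, A, rfl⟩ := hΓ.unboxable B hB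
    · exact ⟨.box B, .inr ⟨h4, hw, B, rfl⟩, fun _ => .inl⟩
    · exact ⟨.box A, .inr ⟨h4, hw, A, rfl⟩, fun _ hv => .inr ⟨h4, hv, A, rfl⟩⟩
  choose! f hf_unboxable hf using exists_unboxable
  refine ⟨Γ.map f, ⟨fun h => hΓ.n (List.map_eq_nil_iff.1 h), fun hc => ?_, ?_⟩, fun v hv => ?_⟩
  · exact (List.length_map f).trans_le (hΓ.c hc)
  · exact List.forall_mem_map.2 hf_unboxable
  · exact ⟨hΓ.n, hΓ.c, fun B hB => hf B hB v (hv _ (List.mem_map_of_mem hB))⟩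

end IsBasis

/-- The truth set of a formula in the neighbourhood model with neighbourhood function `N` and
valuation `V`. -/
def truthSet {W : Type*} (N : W → Set (Set W)) (V : ℕ → Set W) : Fm → Set W
  | .var m => V m
  | .bot => ∅
  | .top => Set.univ
  | .neg A => (truthSet N V A)ᶜ
  | .and A B => truthSet N V A ∩ truthSet N V B
  | .or A B => truthSet N V A ∪ truthSet N V B
  | .imp A B => (truthSet N V A)ᶜ ∪ truthSet N V B
  | .box A => {w | truthSet N V A ∈ N w}

/-- Monotone neighbourhood frames satisfying the frame conditions of the axioms in `𝒜`. -/
structure IsNbhdFrame (Ax : MAx) {W : Type*} (N : W → Set (Set W)) : Prop where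
  mono {w : W} {S S' : Set W} : S ∈ N w → S ⊆ S' → S' ∈ N w
  c {w : W} {S S' : Set W} : Ax.c = true → S ∈ N w → S' ∈ N w → S ∩ S' ∈ N w
  n {w : W} : Ax.n = true → Set.univ ∈ N w
  p {w : W} : Ax.p = true → ∅ ∉ N w
  d {w : W} {S : Set W} : Ax.d = true → S ∈ N w → Sᶜ ∉ N w
  t {w : W} {S : Set W} : Ax.t = true → S ∈ N w → w ∈ S
  four {w : W} {S : Set W} : Ax.four = true → S ∈ N w → {v | S ∈ N v} ∈ N w
  five {w : W} {S : Set W} : Ax.five = true → S ∈ N w ∨ {v | S ∈ N v}ᶜ ∈ N w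

theorem evalP_mem_truthSet {W : Type*} {N : W → Set (Set W)} {V : ℕ → Set W} {w : W} {A : Fm} :
    evalP (w ∈ truthSet N V ·) A ↔ w ∈ truthSet N V A := by
  induction A <;> simp_all [evalP, truthSet, imp_iff_not_or]

theorem MThm.mem_truthSet {W : Type*} {N : W → Set (Set W)} (hN : IsNbhdFrame Ax N) {A : Fm}
    (h : MThm Ax A) (V : ℕ → Set W) (w : W) : w ∈ truthSet N V A := by
  rw [← evalP_mem_truthSet]
  induction h generalizing w with
  | taut h => exact h _
  | mp _ _ ihAB ihA => exact ihAB w (ihA w)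
  | @cong A B _ _ ihAB _ =>
    have subset : truthSet N V A ⊆ truthSet N V B := fun v hA =>
      evalP_mem_truthSet.1 (ihAB v (evalP_mem_truthSet.2 hA))
    exact fun h => hN.mono h subset
  | axM => exact fun h => ⟨hN.mono h Set.inter_subset_left, hN.mono h Set.inter_subset_right⟩
  | axC hc => exact fun h => hN.c hc h.1 h.2
  | axN hn => exact hN.n hn
  | axP hp => exact hN.p hp
  | axD hd => exact fun h => hN.d hd h.1 h.2
  | axT ht => exact fun h => evalP_mem_truthSet.2 (hN.t ht h)
  | ax4 h4 => exact hN.four h4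
  | ax5 h5 => exact hN.five h5

/-- The neighbourhood function of the canonical model. -/
def canonicalNbhd (w : World Ax) : Set (Set (World Ax)) :=
  {S | ∃ Γ, IsBasis w Γ ∧ cone Ax Γ ⊆ S}

theorem isNbhdFrame_canonicalNbhd (h5 : Ax.five = false) :
    IsNbhdFrame Ax (canonicalNbhd (Ax := Ax)) where
  mono := fun ⟨Γ, hΓ, hS⟩ hSS' => ⟨Γ, hΓ, hS.trans hSS'⟩
  c hc := fun ⟨Γ₁, h₁, hS₁⟩ ⟨Γ₂, h₂, hS₂⟩ => ⟨Γ₁ ++ Γ₂, h₁.append hc h₂, fun _ hv =>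
    (List.forall_mem_append.1 hv).imp (hS₁ ·) (hS₂ ·)⟩
  n hn := ⟨[], ⟨fun _ => hn, fun _ => zero_le_one, List.forall_mem_nil _⟩, Set.subset_univ _⟩
  p hp := fun ⟨_, hΓ, hS⟩ => (hΓ.cone_nonempty hp).ne_empty (Set.subset_empty_iff.1 hS)
  d hd := fun ⟨_, h₁, hS₁⟩ ⟨_, h₂, hS₂⟩ =>
    let ⟨_, hv₁, hv₂⟩ := h₁.inter_cone_nonempty hd h₂
    hS₂ hv₂ (hS₁ hv₁)
  t ht := fun ⟨_, hΓ, hS⟩ => hS (hΓ.mem_cone ht)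
  four h4 := fun ⟨Γ, hΓ, hS⟩ =>
    let ⟨Γ', hΓ', hcone⟩ := hΓ.exists_forall_mem_cone_isBasis h4
    ⟨Γ', hΓ', fun v hv => ⟨Γ, hcone v hv, hS⟩⟩
  five h := by simp [h5] at h

/-- The valuation of the canonical model. -/
def canonicalVal (m : ℕ) : Set (World Ax) := {w | (true, .var m) ∈ w.1}

theorem truth_lemma (w : World Ax) (A : Fm) :
    ((true, A) ∈ w.1 → w ∈ truthSet canonicalNbhd canonicalVal A) ∧
      ((false, A) ∈ w.1 → w ∉ truthSet canonicalNbhd canonicalVal A) := by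
  induction A generalizing w with
  | var m =>
    refine ⟨id, fun hf ht => w.2.prop ⟨[(true, .var m), (false, .var m)], ?_, fun _ => ?_⟩⟩
    exacts [by simpa using ⟨ht, hf⟩, .init (Γ := 0) (Δ := 0)]
  | bot => exact ⟨fun h => w.2.prop ⟨[_], by simpa using h, fun _ => .botL⟩, fun _ => id⟩
  | top => exact ⟨fun _ => trivial, fun h _ => w.2.prop ⟨[_], by simpa using h, fun _ => .topR⟩⟩
  | neg A ih =>
    refine ⟨fun h => ?_, fun h hnA => ?_⟩
    · exact (ih w).2 (World.mem_of_rule h fun _ hA G => .negL (hA G))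
    · exact hnA ((ih w).1 (World.mem_of_rule h fun _ hA G => .negR (hA G)))
  | and A B ihA ihB =>
    refine ⟨fun h => ?_, fun h hAB => ?_⟩
    · have hw : (true, A) ∈ w.1 ∧ (true, B) ∈ w.1 :=
        World.mem_and_mem_of_rule h fun _ hAB G => .andL (hAB G)
      exact ⟨(ihA w).1 hw.1, (ihB w).1 hw.2⟩
    · have hw : (false, A) ∈ w.1 ∨ (false, B) ∈ w.1 :=
        World.mem_or_mem_of_rule h fun _ hA hB G => .andR (hA G) (hB G)
      exact hw.elim ((ihA w).2 · hAB.1) ((ihB w).2 · hAB.2)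
  | or A B ihA ihB =>
    refine ⟨fun h => ?_, fun h hAB => ?_⟩
    · have hw : (true, A) ∈ w.1 ∨ (true, B) ∈ w.1 :=
        World.mem_or_mem_of_rule h fun _ hA hB G => .orL (hA G) (hB G)
      exact hw.imp (ihA w).1 (ihB w).1
    · have hw : (false, A) ∈ w.1 ∧ (false, B) ∈ w.1 :=
        World.mem_and_mem_of_rule h fun _ hAB G => .orR (hAB G)
      exact hAB.elim ((ihA w).2 hw.1) ((ihB w).2 hw.2)
  | imp A B ihA ihB =>
    refine ⟨fun h => ?_, fun h hAB => ?_⟩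
    · have hw : (true, B) ∈ w.1 ∨ (false, A) ∈ w.1 :=
        World.mem_or_mem_of_rule h fun _ hB hA G => .impL (hB G) (hA G)
      exact hw.symm.imp (ihA w).2 (ihB w).1
    · have hw : (true, A) ∈ w.1 ∧ (false, B) ∈ w.1 :=
        World.mem_and_mem_of_rule h fun _ hAB G => .impR (hAB G)
      exact hAB.elim (· ((ihA w).1 hw.1)) ((ihB w).2 hw.2)
  | box A ih =>
    refine ⟨fun h => ⟨[A], isBasis_singleton (.inl h), fun v hv => ?_⟩, fun h ⟨Γ, hΓ, hS⟩ => ?_⟩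
    · exact (ih v).1 (hv A (List.mem_singleton_self A))
    · obtain ⟨v, hv, hA⟩ := hΓ.exists_mem_cone_of_box_denied h
      exact (ih v).2 hA (hS hv)

theorem MThm.derivable (h5 : Ax.five = false) {A : Fm} (h : MThm Ax A) :
    LM Ax ([(0, {A})], none) := by
  have no_world (w : World Ax) : ∃ s ∈ [(false, A)], s ∉ w.1 :=
    ⟨(false, A), List.mem_singleton_self _, fun hA =>
      (truth_lemma w A).2 hA (h.mem_truthSet (isNbhdFrame_canonicalNbhd h5) _ w)⟩
  exact LM.of_forall_world no_world []

/-- Soundness and completeness of the linear nested sequent calculus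
`LNS_M𝒜ConW` for the monotone modal logic `M𝒜`, for every
`𝒜 ⊆ {C, N, P, D, T, 4}`: `A ∈ M𝒜` iff the linear nested sequent `⇒ A` is
derivable in `LNS_M𝒜ConW`. -/
theorem LNSm_sound_complete (Ax : MAx) (h5 : Ax.five = false) (A : Fm) :
    MThm Ax A ↔ LM Ax ([(0, {A})], none) := by
  exact ⟨MThm.derivable h5, LM.mthm⟩
end

section
/- A sequent Γ ⇒ Δ is provable in the end-active variant of the linear nested sequent calculus LNS_K if and only if its translation TL_{x₁}(Γ ⇒ Δ) is provable in the end-active labelled line sequent calculus LLS_K. -/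
/-- The end-active variant of the linear nested sequent calculus `LNS_K` for
modal logic `K`:  a linear nested sequent is a nonempty list of components
joined by `⫽`; the classical propositional rules are applied in the last
component, and the modal rules `□_L` and `□_R` are applied at the end. -/
inductive EAK : List Cmp → Prop
  | init {G : List Cmp} {Γ Δ : Multiset Fm} {m : ℕ} :
      EAK (G ++ [(Fm.var m ::ₘ Γ, Fm.var m ::ₘ Δ)])
  | botL {G Γ Δ} : EAK (G ++ [(Fm.bot ::ₘ Γ, Δ)])
  | topR {G Γ Δ} : EAK (G ++ [(Γ, Fm.top ::ₘ Δ)])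
  | negL {G Γ Δ A} :
      EAK (G ++ [(Γ, A ::ₘ Δ)]) → EAK (G ++ [(Fm.neg A ::ₘ Γ, Δ)])
  | negR {G Γ Δ A} :
      EAK (G ++ [(A ::ₘ Γ, Δ)]) → EAK (G ++ [(Γ, Fm.neg A ::ₘ Δ)])
  | andL {G Γ Δ A B} :
      EAK (G ++ [(A ::ₘ B ::ₘ Γ, Δ)]) → EAK (G ++ [(Fm.and A B ::ₘ Γ, Δ)])
  | andR {G Γ Δ A B} :
      EAK (G ++ [(Γ, A ::ₘ Δ)]) → EAK (G ++ [(Γ, B ::ₘ Δ)]) →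
      EAK (G ++ [(Γ, Fm.and A B ::ₘ Δ)])
  | orL {G Γ Δ A B} :
      EAK (G ++ [(A ::ₘ Γ, Δ)]) → EAK (G ++ [(B ::ₘ Γ, Δ)]) →
      EAK (G ++ [(Fm.or A B ::ₘ Γ, Δ)])
  | orR {G Γ Δ A B} :
      EAK (G ++ [(Γ, A ::ₘ B ::ₘ Δ)]) → EAK (G ++ [(Γ, Fm.or A B ::ₘ Δ)])
  | impL {G Γ Δ A B} :
      EAK (G ++ [(B ::ₘ Γ, Δ)]) → EAK (G ++ [(Γ, A ::ₘ Δ)]) →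
      EAK (G ++ [(Fm.imp A B ::ₘ Γ, Δ)])
  | impR {G Γ Δ A B} :
      EAK (G ++ [(A ::ₘ Γ, B ::ₘ Δ)]) → EAK (G ++ [(Γ, Fm.imp A B ::ₘ Δ)])
  | boxL {G Γ Δ Sg Pp A} :
      EAK (G ++ [(Γ, Δ), (A ::ₘ Sg, Pp)]) →
      EAK (G ++ [(Fm.box A ::ₘ Γ, Δ), (Sg, Pp)])
  | boxR {G Γ Δ A} :
      EAK (G ++ [(Γ, Δ), (0, {A})]) → EAK (G ++ [(Γ, Fm.box A ::ₘ Δ)])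

/-- Labelled formulas: a state variable (a natural number) together with a
formula. -/
abbrev LFm := ℕ × Fm

/-- The end-active labelled line sequent calculus `LLS_K`: sequents consist of
a singleton relation set `{z R x}` together with multisets of labelled
formulas; the propositional rules are applied to formulas labelled with the
second element of the relation, `□_L` moves a boxed formula along the
relation, and `□_R` introduces a fresh state variable. -/
inductive LLSK : ℕ → ℕ → Multiset LFm → Multiset LFm → Prop
  | init {z x : ℕ} {X Y : Multiset LFm} {m : ℕ} :
      LLSK z x ((x, Fm.var m) ::ₘ X) ((x, Fm.var m) ::ₘ Y)
  | botL {z x X Y} : LLSK z x ((x, Fm.bot) ::ₘ X) Y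
  | topR {z x X Y} : LLSK z x X ((x, Fm.top) ::ₘ Y)
  | negL {z x X Y A} :
      LLSK z x X ((x, A) ::ₘ Y) → LLSK z x ((x, Fm.neg A) ::ₘ X) Y
  | negR {z x X Y A} :
      LLSK z x ((x, A) ::ₘ X) Y → LLSK z x X ((x, Fm.neg A) ::ₘ Y)
  | andL {z x X Y A B} :
      LLSK z x ((x, A) ::ₘ (x, B) ::ₘ X) Y → LLSK z x ((x, Fm.and A B) ::ₘ X) Y
  | andR {z x X Y A B} :
      LLSK z x X ((x, A) ::ₘ Y) → LLSK z x X ((x, B) ::ₘ Y) →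
      LLSK z x X ((x, Fm.and A B) ::ₘ Y)
  | orL {z x X Y A B} :
      LLSK z x ((x, A) ::ₘ X) Y → LLSK z x ((x, B) ::ₘ X) Y →
      LLSK z x ((x, Fm.or A B) ::ₘ X) Y
  | orR {z x X Y A B} :
      LLSK z x X ((x, A) ::ₘ (x, B) ::ₘ Y) → LLSK z x X ((x, Fm.or A B) ::ₘ Y)
  | impL {z x X Y A B} :
      LLSK z x ((x, B) ::ₘ X) Y → LLSK z x X ((x, A) ::ₘ Y) →
      LLSK z x ((x, Fm.imp A B) ::ₘ X) Y
  | impR {z x X Y A B} :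
      LLSK z x ((x, A) ::ₘ X) ((x, B) ::ₘ Y) →
      LLSK z x X ((x, Fm.imp A B) ::ₘ Y)
  | boxL {x y X Y A} :
      LLSK x y ((y, A) ::ₘ X) Y → LLSK x y ((x, Fm.box A) ::ₘ X) Y
  | boxR {z x y X Y A} : y ≠ x → y ≠ z →
      (∀ p ∈ X, Prod.fst p ≠ y) → (∀ p ∈ Y, Prod.fst p ≠ y) →
      LLSK x y X ((y, A) ::ₘ Y) → LLSK z x X ((x, Fm.box A) ::ₘ Y)

/-!
Both calculi act on the last component only, apart from `□_L`, which also reads the antecedent of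
the component before it. Hence whether a labelled sequent with relation `zRx` is derivable depends
only on its formulas `z : A` on the left and `x : A` on either side. Every other labelled formula is
a side formula which no rule can touch again: it records the components to the left of the last two,
and a nested derivation can be carried out in the presence of arbitrary side formulas.
-/

/-- The multiset of formulas that carry the label `x` in `X`. -/
def formulasAt (x : ℕ) (X : Multiset LFm) : Multiset Fm :=
  (X.filter fun p => p.1 = x).map Prod.snd

theorem formulasAt_cons_self (x : ℕ) (A : Fm) (X : Multiset LFm) :
    formulasAt x ((x, A) ::ₘ X) = A ::ₘ formulasAt x X := by
  simp [formulasAt]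

theorem formulasAt_cons_of_ne {x y : ℕ} (h : y ≠ x) (A : Fm) (X : Multiset LFm) :
    formulasAt x ((y, A) ::ₘ X) = formulasAt x X := by
  simp [formulasAt, h]

theorem formulasAt_eq_zero {x : ℕ} {X : Multiset LFm} (h : ∀ p ∈ X, p.1 ≠ x) :
    formulasAt x X = 0 := by
  rw [formulasAt, Multiset.filter_eq_nil.2 h, Multiset.map_zero]

theorem formulasAt_map_mk_self (x : ℕ) (Γ : Multiset Fm) :
    formulasAt x (Γ.map (Prod.mk x)) = Γ := by
  simp [formulasAt, Multiset.filter_map]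

theorem formulasAt_map_mk_of_ne {x y : ℕ} (h : y ≠ x) (Γ : Multiset Fm) :
    formulasAt x (Γ.map (Prod.mk y)) = 0 :=
  formulasAt_eq_zero (by simp [h])

theorem map_mk_formulasAt (x : ℕ) (X : Multiset LFm) :
    (formulasAt x X).map (Prod.mk x) = X.filter fun p => p.1 = x := by
  rw [formulasAt, Multiset.map_map]
  refine (Multiset.map_congr rfl fun p hp => ?_).trans (Multiset.map_id _)
  exact Prod.ext (Multiset.mem_filter.1 hp).2.symm rfl

theorem map_mk_formulasAt_le (x : ℕ) (X : Multiset LFm) :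
    (formulasAt x X).map (Prod.mk x) ≤ X :=
  (map_mk_formulasAt x X).trans_le (Multiset.filter_le _ _)

theorem map_mk_formulasAt_add_le {x y : ℕ} (h : x ≠ y) (X : Multiset LFm) :
    (formulasAt x X).map (Prod.mk x) + (formulasAt y X).map (Prod.mk y) ≤ X := by
  have disjoint : (X.filter fun p => p.1 = x ∧ p.1 = y) = 0 :=
    Multiset.filter_eq_nil.2 fun _ _ ⟨hx, hy⟩ => h (hx.symm.trans hy)
  rw [map_mk_formulasAt, map_mk_formulasAt, Multiset.filter_add_filter, disjoint, add_zero]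
  exact Multiset.filter_le _ _

theorem exists_fresh_label (z x : ℕ) (X Y : Multiset LFm) :
    ∃ y, y ≠ x ∧ y ≠ z ∧ (∀ p ∈ X, p.1 ≠ y) ∧ ∀ p ∈ Y, p.1 ≠ y := by
  obtain ⟨y, hy⟩ := Infinite.exists_notMem_finset ({x, z} ∪ ((X + Y).map Prod.fst).toFinset)
  simp only [Finset.mem_union, Finset.mem_insert, Finset.mem_singleton, Multiset.mem_toFinset,
    Multiset.mem_map, Multiset.mem_add, not_or, not_exists, not_and] at hy
  exact ⟨y, hy.1.1, hy.1.2, fun p hp => hy.2 p (.inl hp), fun p hp => hy.2 p (.inr hp)⟩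

/-- The last component of a linear nested sequent. The empty list gets the empty component, so that
the component preceding the last one, `lastComponent S.dropLast`, is empty if there is none. -/
def lastComponent (S : List Cmp) : Cmp := S.getLastD 0

theorem lastComponent_concat (G : List Cmp) (c : Cmp) : lastComponent (G ++ [c]) = c :=
  List.getLastD_concat

theorem lastComponent_append_pair (G : List Cmp) (c d : Cmp) :
    lastComponent (G ++ [c, d]) = d := by
  rw [List.append_cons, lastComponent_concat]

theorem lastComponent_dropLast_append_pair (G : List Cmp) (c d : Cmp) :
    lastComponent (G ++ [c, d]).dropLast = c := by
  rw [List.append_cons, List.dropLast_concat, lastComponent_concat]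

theorem exists_eq_concat_of_lastComponent_fst_eq_cons {G : List Cmp} {A : Fm} {Γ : Multiset Fm}
    (h : (lastComponent G).1 = A ::ₘ Γ) : ∃ G' Δ, G = G' ++ [(A ::ₘ Γ, Δ)] := by
  rcases G.eq_nil_or_concat' with rfl | ⟨G', c, rfl⟩
  · exact absurd h.symm Multiset.cons_ne_zero
  · rw [lastComponent_concat] at h
    exact ⟨G', c.2, by rw [← h]⟩

theorem LLSK.eak {z x : ℕ} {X Y : Multiset LFm} (h : LLSK z x X Y) (hzx : z ≠ x)
    {G : List Cmp} (hG : (lastComponent G).1 = formulasAt z X) :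
    EAK (G ++ [(formulasAt x X, formulasAt x Y)]) := by
  induction h generalizing G with
      simp only [formulasAt_cons_self, formulasAt_cons_of_ne hzx.symm] at *
  | boxL _ ih =>
    obtain ⟨G, Δ, rfl⟩ := exists_eq_concat_of_lastComponent_fst_eq_cons hG
    rw [formulasAt_cons_of_ne hzx, ← List.append_cons]
    refine .boxL ?_
    rw [List.append_cons]
    exact ih hzx (by rw [lastComponent_concat])
  | @boxR _ x _ X Y _ hyx _ hX hY _ ih =>
    have premiss := ih hyx.symm (G := G ++ [(formulasAt x X, formulasAt x Y)])
      (by rw [lastComponent_concat])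
    rw [formulasAt_eq_zero hX, formulasAt_eq_zero hY, ← List.append_cons] at premiss
    exact .boxR premiss
  | init => exact .init
  | botL => exact .botL
  | topR => exact .topR
  | negL _ ih => exact .negL (ih hzx hG)
  | negR _ ih => exact .negR (ih hzx hG)
  | andL _ ih => exact .andL (ih hzx hG)
  | andR _ _ ih₁ ih₂ => exact .andR (ih₁ hzx hG) (ih₂ hzx hG)
  | orL _ _ ih₁ ih₂ => exact .orL (ih₁ hzx hG) (ih₂ hzx hG)
  | orR _ ih => exact .orR (ih hzx hG)
  | impL _ _ ih₁ ih₂ => exact .impL (ih₁ hzx hG) (ih₂ hzx hG)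
  | impR _ ih => exact .impR (ih hzx hG)

theorem EAK.llsk {S : List Cmp} (h : EAK S) (z x : ℕ) (X Y : Multiset LFm) :
    LLSK z x
      ((lastComponent S).1.map (Prod.mk x) + ((lastComponent S.dropLast).1.map (Prod.mk z) + X))
      ((lastComponent S).2.map (Prod.mk x) + Y) := by
  induction h generalizing z x X Y with
      simp only [List.dropLast_concat, lastComponent_concat, lastComponent_append_pair,
        lastComponent_dropLast_append_pair, Multiset.map_cons, Multiset.map_singleton,
        Multiset.map_zero, Multiset.cons_add, Multiset.add_cons, Multiset.singleton_add,
        zero_add] at *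
  | boxL _ ih => exact .boxL (ih z x X Y)
  | boxR _ ih =>
    obtain ⟨y, hyx, hyz, hX, hY⟩ := exists_fresh_label z x _ _
    exact .boxR hyx hyz hX hY (ih x y _ _)
  | init => exact .init
  | botL => exact .botL
  | topR => exact .topR
  | negL _ ih => exact .negL (ih z x X Y)
  | negR _ ih => exact .negR (ih z x X Y)
  | andL _ ih => exact .andL (ih z x X Y)
  | andR _ _ ih₁ ih₂ => exact .andR (ih₁ z x X Y) (ih₂ z x X Y)
  | orL _ _ ih₁ ih₂ => exact .orL (ih₁ z x X Y) (ih₂ z x X Y)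
  | orR _ ih => exact .orR (ih z x X Y)
  | impL _ _ ih₁ ih₂ => exact .impL (ih₁ z x X Y) (ih₂ z x X Y)
  | impR _ ih => exact .impR (ih z x X Y)

theorem endActive_LNSK_iff_LLSK_general {z x : ℕ} (hzx : z ≠ x) {G : List Cmp}
    {X Y : Multiset LFm} (hG : (lastComponent G).1 = formulasAt z X) :
    EAK (G ++ [(formulasAt x X, formulasAt x Y)]) ↔ LLSK z x X Y := by
  refine ⟨fun h => ?_, fun h => h.eak hzx hG⟩
  obtain ⟨X', hX⟩ := le_iff_exists_add.1 (map_mk_formulasAt_add_le hzx.symm X)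
  obtain ⟨Y', hY⟩ := le_iff_exists_add.1 (map_mk_formulasAt_le x Y)
  have weakened := h.llsk z x X' Y'
  rwa [List.dropLast_concat, lastComponent_concat, hG, ← add_assoc, ← hX, ← hY] at weakened

/-- A sequent `Γ ⇒ Δ` is provable in the end-active variant of the linear
nested sequent calculus `LNS_K` if and only if its translation
`TL_{x₁}(Γ ⇒ Δ) = x₀Rx₁, x₁:Γ ⇒ x₁:Δ` is provable in the end-active labelled
line sequent calculus `LLS_K` (taking `x₀ = 0` and `x₁ = 1`). -/
theorem endActive_LNSK_iff_LLSK (Γ Δ : Multiset Fm) :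
    EAK [(Γ, Δ)] ↔
      LLSK 0 1 (Γ.map fun A => (1, A)) (Δ.map fun A => (1, A)) := by
  simpa only [List.nil_append, formulasAt_map_mk_self] using
    endActive_LNSK_iff_LLSK_general (G := []) (Y := Δ.map (Prod.mk 1)) zero_ne_one
      (formulasAt_map_mk_of_ne one_ne_zero Γ).symm
end
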